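/- (Proposition 1, classical case.) Suppose the total click probability on Bob's side is independent of the message: there exists c : ℬ → ℝ with c(b) > 0 such that Σ_i p_i η_i(A,b) = c(b) for every A ∈ M and b ∈ ℬ. Then the detection-loophole statistics P_DL admit a classical model over the same message set M: there exist nonnegative reals R(B|A,b) with Σ_{B∈𝒪} R(B|A,b) = 1 for every A, b, such that P_DL(B|a,b) = Σ_{A∈M} R(B|A,b) P(A|a) for all B, a, b. In particular, P_DL admits a d-dimensional classical model with d = |M|, so if P_DL does not admit a d-dimensional classical model then neither does P(B|a,b) := Σ_{i,A} p_i P_i(B|A,b) P(A|a). -/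

import Mathlib

/-!
Conditioned on a click at `(A, b)`, Bob's strategy `i` has probability proportional to
`p i * η i A b`, so his output follows the mixture of the `Pᵢ(·|A,b)` with these weights. A click
in general also carries information about the message `A`; when its probability does not depend on
`A` it carries none, so postselection leaves the distribution `P(·|a)` unchanged and the
postselected statistics are those of the conditional mixture.
-/

/-- `Q B a b` (the probability of output `B` given inputs `a`, `b`) admits a
`d`-dimensional classical model: there are a message set of cardinality `d`
(represented by `Fin d`), distributions `S(·|a)` on the messages and
`R(·|A,b)` on the outputs, with `Q(B|a,b) = ∑ A, R(B|A,b) S(A|a)`. -/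
def AdmitsClassicalModel {𝒜 ℬ 𝒪 : Type*} [Fintype 𝒜] [Fintype ℬ] [Fintype 𝒪]
    (d : ℕ) (Q : 𝒪 → 𝒜 → ℬ → ℝ) : Prop :=
  ∃ (S : 𝒜 → Fin d → ℝ) (R : Fin d → ℬ → 𝒪 → ℝ),
    (∀ a A, 0 ≤ S a A) ∧ (∀ a, ∑ A, S a A = 1) ∧
    (∀ A b B, 0 ≤ R A b B) ∧ (∀ A b, ∑ B, R A b B = 1) ∧
    (∀ B a b, Q B a b = ∑ A, R A b B * S a A)

open Finset

section WeightedSums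

variable {K ι κ : Type*} [Fintype ι]

theorem centerMass_apply_eq_div [Field K] (w : ι → K) (z : ι → κ → K) (x : κ) :
    univ.centerMass w z x = (∑ i, w i * z i x) / ∑ i, w i := by
  simp only [centerMass, Pi.smul_apply, Finset.sum_apply, smul_eq_mul, div_eq_inv_mul]

theorem sum_sum_mul_eq_of_forall_sum_eq [Fintype κ] [Semiring K] {w : ι → κ → K} {c : K}
    (hw : ∀ k, ∑ i, w i k = c) {q : κ → K} (hq : ∑ k, q k = 1) :
    ∑ i, ∑ k, w i k * q k = c := by
  rw [sum_comm]
  simp only [← sum_mul, hw]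
  rw [← mul_sum, hq, mul_one]

theorem sum_sum_mul_div_eq_sum_centerMass_mul [Fintype κ] [Field K] {Ω : Type*}
    {w : ι → κ → K} (z : ι → κ → Ω → K) {c : K} (hw : ∀ k, ∑ i, w i k = c)
    {q : κ → K} (hq : ∑ k, q k = 1) (x : Ω) :
    (∑ i, ∑ k, w i k * z i k x * q k) / (∑ i, ∑ k, w i k * q k) =
      ∑ k, univ.centerMass (fun i => w i k) (fun i => z i k) x * q k := by
  calc
    _ = (∑ k, (∑ i, w i k * z i k x) * q k) / c := by
      rw [sum_sum_mul_eq_of_forall_sum_eq hw hq, sum_comm]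
      simp only [sum_mul]
    _ = _ := by
      rw [sum_div]
      simp only [centerMass_apply_eq_div, hw, div_mul_eq_mul_div]

end WeightedSums

/-- A classical model for `Q(B|a,b)` over the message type `M`: Alice sends `A` with probability
`S a A`, Bob answers `B` with probability `R A b B`. Unlike `AdmitsClassicalModel`, this fixes the
model and allows any finite type of messages. -/
structure IsClassicalModel {K 𝒜 ℬ M 𝒪 : Type*} [Semiring K] [PartialOrder K]
    [Fintype M] [Fintype 𝒪]
    (S : 𝒜 → M → K) (R : M → ℬ → 𝒪 → K) (Q : 𝒪 → 𝒜 → ℬ → K) : Prop where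
  encoding_mem : ∀ a, S a ∈ stdSimplex K M
  response_mem : ∀ A b, R A b ∈ stdSimplex K 𝒪
  eq_sum : ∀ B a b, Q B a b = ∑ A, R A b B * S a A

namespace IsClassicalModel

variable {𝒜 ℬ M 𝒪 : Type*} [Fintype M] [Fintype 𝒪]

theorem reindex {K N : Type*} [Semiring K] [PartialOrder K] [Fintype N]
    {S : 𝒜 → M → K} {R : M → ℬ → 𝒪 → K} {Q : 𝒪 → 𝒜 → ℬ → K}
    (h : IsClassicalModel S R Q) (e : N ≃ M) :
    IsClassicalModel (fun a => S a ∘ e) (R ∘ e) Q where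
  encoding_mem a :=
    ⟨fun A => (h.encoding_mem a).1 (e A), (e.sum_comp (S a)).trans (h.encoding_mem a).2⟩
  response_mem A := h.response_mem (e A)
  eq_sum B a b := (h.eq_sum B a b).trans (e.sum_comp fun A => R A b B * S a A).symm

theorem admitsClassicalModel [Fintype 𝒜] [Fintype ℬ]
    {S : 𝒜 → M → ℝ} {R : M → ℬ → 𝒪 → ℝ} {Q : 𝒪 → 𝒜 → ℬ → ℝ}
    (h : IsClassicalModel S R Q) : AdmitsClassicalModel (Fintype.card M) Q :=
  have h' := h.reindex (Fintype.equivFin M).symm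
  ⟨_, _, fun a => (h'.encoding_mem a).1, fun a => (h'.encoding_mem a).2,
    fun A b => (h'.response_mem A b).1, fun A b => (h'.response_mem A b).2, h'.eq_sum⟩

end IsClassicalModel

/-- Bob's output distribution on receiving `A` with input `b`, conditioned on a click. The weight
`w i A b` stands for `p i * η i A b`, the joint probability of strategy `i` and a click.
If these weights sum to zero, the value is the zero function rather than a distribution. -/
def responseGivenClick {K ℬ M 𝒪 I : Type*} [Field K] [Fintype I]
    (w : I → M → ℬ → K) (Pi : I → M → ℬ → 𝒪 → K) (A : M) (b : ℬ) : 𝒪 → K :=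
  univ.centerMass (fun i => w i A b) (fun i => Pi i A b)

theorem prop1_classical_general
    {K 𝒜 ℬ M 𝒪 I : Type*} [Field K] [LinearOrder K] [IsStrictOrderedRing K]
    [Fintype M] [Fintype 𝒪] [Fintype I]
    {P : 𝒜 → M → K} (hP : ∀ a, P a ∈ stdSimplex K M)
    {Pi : I → M → ℬ → 𝒪 → K} (hPi : ∀ i A b, Pi i A b ∈ stdSimplex K 𝒪)
    {w : I → M → ℬ → K} (hw : ∀ i A b, 0 ≤ w i A b)
    {PDL : 𝒪 → 𝒜 → ℬ → K}
    (hPDL : ∀ B a b, PDL B a b =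
      (∑ i, ∑ A, w i A b * Pi i A b B * P a A) / ∑ i, ∑ A, w i A b * P a A)
    {c : ℬ → K} (hc : ∀ b, 0 < c b) (hindep : ∀ A b, ∑ i, w i A b = c b) :
    IsClassicalModel P (responseGivenClick w Pi) PDL where
  encoding_mem := hP
  response_mem A b :=
    (convex_stdSimplex K 𝒪).centerMass_mem (fun i _ => hw i A b)
      (hindep A b ▸ hc b) (fun i _ => hPi i A b)
  eq_sum B a b :=
    (hPDL B a b).trans <|
      sum_sum_mul_div_eq_sum_centerMass_mul (fun i A => Pi i A b) (hindep · b) (hP a).2 B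

/-- Proposition 1, classical case: if the total click probability
on Bob's side `∑ i, p i * η i A b = c b` is independent of the message `A` (and
positive), then the detection-loophole statistics `P_DL` admit a classical model
over the same message set `M`; in particular `P_DL` admits a `|M|`-dimensional
classical model, so if `P_DL` admits no `|M|`-dimensional classical model then
neither do the no-attack statistics `P(B|a,b) = ∑ i A, p i * Pᵢ(B|A,b) * P(A|a)`. -/
theorem prop1_classical
    {𝒜 ℬ M 𝒪 I : Type*}
    [Fintype 𝒜] [Fintype ℬ] [Fintype M] [Fintype 𝒪] [Fintype I]
    [Nonempty 𝒜] [Nonempty ℬ] [Nonempty M] [Nonempty 𝒪] [Nonempty I]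
    (p : I → ℝ) (hp : ∀ i, 0 ≤ p i) (hp1 : ∑ i, p i = 1)
    (P : 𝒜 → M → ℝ) (hP : ∀ a A, 0 ≤ P a A) (hP1 : ∀ a, ∑ A, P a A = 1)
    (Pi : I → M → ℬ → 𝒪 → ℝ)
    (hPi : ∀ i A b B, 0 ≤ Pi i A b B) (hPi1 : ∀ i A b, ∑ B, Pi i A b B = 1)
    (η : I → M → ℬ → ℝ) (hη : ∀ i A b, 0 ≤ η i A b ∧ η i A b ≤ 1)
    -- the click probability D(a,b) is strictly positive
    (D : 𝒜 → ℬ → ℝ) (hD : ∀ a b, D a b = ∑ i, ∑ A, p i * η i A b * P a A)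
    (hDpos : ∀ a b, 0 < D a b)
    -- the detection-loophole statistics
    (PDL : 𝒪 → 𝒜 → ℬ → ℝ)
    (hPDL : ∀ B a b, PDL B a b =
      (∑ i, ∑ A, p i * η i A b * Pi i A b B * P a A) / D a b)
    -- hypothesis: the click probability on Bob's side is independent of A
    (c : ℬ → ℝ) (hc : ∀ b, 0 < c b)
    (hindep : ∀ A b, ∑ i, p i * η i A b = c b) :
    -- P_DL admits a classical model over the same message set M
    (∃ R : M → ℬ → 𝒪 → ℝ,
      (∀ A b B, 0 ≤ R A b B) ∧ (∀ A b, ∑ B, R A b B = 1) ∧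
      (∀ B a b, PDL B a b = ∑ A, R A b B * P a A)) ∧
    -- in particular: if P_DL admits no |M|-dimensional classical model,
    -- neither do the statistics without the attack
    (¬ AdmitsClassicalModel (Fintype.card M) PDL →
      ¬ AdmitsClassicalModel (Fintype.card M)
        (fun B a b => ∑ i, ∑ A, p i * Pi i A b B * P a A)) := by
  have model := prop1_classical_general (fun a => ⟨hP a, hP1 a⟩)
    (fun i A b => ⟨hPi i A b, hPi1 i A b⟩) (fun i A b => mul_nonneg (hp i) (hη i A b).1)
    (fun B a b => (hPDL B a b).trans (by rw [hD])) hc hindep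
  exact ⟨⟨_, fun A b => (model.response_mem A b).1, fun A b => (model.response_mem A b).2,
    model.eq_sum⟩, fun hno => absurd model.admitsClassicalModel hno⟩
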